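/- Let Ω be a nonempty preconnected open subset of ℂ^d and let g : ℂ^d → (Fin N → ℂ) be a map that is analytic on Ω. Let U be a nonempty open subset of Ω. Then the vanishing ideal of g(U) equals the vanishing ideal of g(Ω): for every multivariate polynomial p ∈ ℂ[X₁, …, X_N], p vanishes at every point of g(U) if and only if p vanishes at every point of g(Ω). In particular, the Zariski closures of g(U) and of g(Ω) in ℂ^N coincide. -/

import Mathlib

/-- Identity principle for Zariski closures: if `g` is analytic on a nonempty preconnected
open set `Ω ⊆ ℂ^d` and `U ⊆ Ω` is nonempty open, then a polynomial vanishes on `g(U)` iff it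
vanishes on `g(Ω)`; in particular `g(U)` and `g(Ω)` have the same Zariski closure. -/
theorem stmt_7 {d N : ℕ} (Ω : Set (Fin d → ℂ)) (hΩne : Ω.Nonempty)
    (hΩconn : IsPreconnected Ω) (hΩopen : IsOpen Ω)
    (g : (Fin d → ℂ) → (Fin N → ℂ)) (hg : AnalyticOnNhd ℂ g Ω)
    (U : Set (Fin d → ℂ)) (hUne : U.Nonempty) (hUopen : IsOpen U) (hUΩ : U ⊆ Ω) :
    ∀ p : MvPolynomial (Fin N) ℂ,
      (∀ y ∈ g '' U, MvPolynomial.eval y p = 0) ↔ (∀ y ∈ g '' Ω, MvPolynomial.eval y p = 0) := by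
  intro p
  constructor
  · rintro h _ ⟨x, hx, rfl⟩
    obtain ⟨z, hz⟩ := hUne
    have hA : AnalyticOnNhd ℂ (fun x ↦ MvPolynomial.eval (g x) p) Ω := by
      intro w hw
      have := AnalyticAt.aeval_mvPolynomial (f := g) (z := w)
        (fun i ↦ (analyticAt_pi_iff.1 (hg w hw)) i) p
      simpa [MvPolynomial.aeval_eq_eval] using this
    have h0 : (fun x ↦ MvPolynomial.eval (g x) p) =ᶠ[nhds z] 0 := by
      filter_upwards [hUopen.mem_nhds hz] with w hw
      exact h _ ⟨w, hw, rfl⟩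
    exact hA.eqOn_zero_of_preconnected_of_eventuallyEq_zero hΩconn (hUΩ hz) h0 hx
  · rintro h _ ⟨x, hx, rfl⟩
    exact h _ ⟨x, hUΩ hx, rfl⟩
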